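/- arXiv:0901.3646 — 3 statements merged into one kernel-verified Lean document; each statement's English description precedes it below -/
import Mathlib

section
/- If A is a C*-algebra in which the spectrum of every self-adjoint element is finite, then A is finite dimensional as a complex vector space. -/
/-!
An orthogonal sequence of nonzero projections `pₙ` produces the self-adjoint element `∑ 2⁻ⁿ pₙ`,
whose spectrum contains every `2⁻ⁿ`. Finiteness of all self-adjoint spectra therefore rules out
infinite strictly descending chains of projections, and every projection is a finite orthogonal sum
of minimal ones. A self-adjoint element below a minimal projection `p` has only finitely many
spectral values, and its spectral projections lie below `p`, so `pAp = ℂp`. By the C⋆-identity,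
`pAq` is then at most one-dimensional for minimal `p` and `q`. In the unitization, expanding `1` on
both sides of `1 · A · 1` as a sum of minimal projections leaves finitely many such pieces.
-/

open scoped Pointwise

section Projections

section Semigroup

variable {A : Type*} [Semigroup A] {f : ℕ → A}

lemma mul_eq_left_of_le_of_succ (hidem : ∀ n, IsIdempotentElem (f n))
    (hsucc : ∀ n, f (n + 1) * f n = f (n + 1)) {m n : ℕ} (hmn : m ≤ n) : f n * f m = f n := by
  induction n, hmn using Nat.le_induction with
  | base => exact hidem m
  | succ n _ ih => rw [← hsucc n, mul_assoc, ih]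

end Semigroup

/-- `q` is a projection strictly below the projection `p`. The order on projections is expressed
by `q * p = q`, so that no order on the ambient algebra is required. -/
structure IsProperSubprojection {A : Type*} [Mul A] [Star A] (q p : A) : Prop where
  left : IsStarProjection q
  right : IsStarProjection p
  mul_eq : q * p = q
  ne : q ≠ p

/-- A minimal projection: a nonzero projection whose only proper subprojection is `0`. -/
structure IsMinimalProjection {A : Type*} [MulZeroClass A] [Star A] (p : A) : Prop extends
    IsStarProjection p where
  ne_zero : p ≠ 0
  eq_zero_of_isProperSubprojection : ∀ q, IsProperSubprojection q p → q = 0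

variable {A : Type*} [NonUnitalRing A] [StarRing A]

lemma pairwise_mul_sub_succ_eq_zero {f : ℕ → A} (hf : ∀ n, IsStarProjection (f n))
    (hsucc : ∀ n, f (n + 1) * f n = f (n + 1)) :
    Pairwise fun m n ↦ (f m - f (m + 1)) * (f n - f (n + 1)) = 0 := by
  have hmul {m n : ℕ} (hmn : m ≤ n) : f n * f m = f n :=
    mul_eq_left_of_le_of_succ (fun n ↦ (hf n).isIdempotentElem) hsucc hmn
  have hgt {m n : ℕ} (hnm : n < m) : (f m - f (m + 1)) * (f n - f (n + 1)) = 0 := by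
    rw [sub_mul, mul_sub, mul_sub, hmul hnm.le, hmul hnm, hmul (hnm.le.trans m.le_succ),
      hmul (Nat.succ_le_succ hnm.le), sub_self, sub_self, sub_self]
  have hsa (n : ℕ) : IsSelfAdjoint (f n - f (n + 1)) :=
    (hf n).isSelfAdjoint.sub (hf (n + 1)).isSelfAdjoint
  intro m n hmn
  rcases hmn.lt_or_gt with hlt | hlt
  · simpa only [star_mul, (hsa _).star_eq, star_zero] using congrArg star (hgt hlt)
  · exact hgt hlt

lemma IsProperSubprojection.sub {p q : A} (h : IsProperSubprojection q p) (hq : q ≠ 0) :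
    IsProperSubprojection (p - q) p where
  left := h.left.sub_of_mul_eq_left h.right h.mul_eq
  right := h.right
  mul_eq := by rw [sub_mul, h.right.isIdempotentElem.eq, h.mul_eq]
  ne := by rwa [Ne, sub_eq_self]

theorem isStarProjection_induction (hwf : WellFounded (IsProperSubprojection (A := A)))
    {P : ∀ p : A, IsStarProjection p → Prop} (zero : P 0 (.zero A))
    (minimal : ∀ p (hp : IsMinimalProjection p), P p hp.toIsStarProjection)
    (add : ∀ p q (hp : IsStarProjection p) (hq : IsStarProjection q) (hpq : p * q = 0),
      P p hp → P q hq → P (p + q) (hp.add hq hpq))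
    {p : A} (hp : IsStarProjection p) : P p hp := by
  induction p using hwf.induction with
  | _ p ih =>
    by_cases hp0 : p = 0
    · subst hp0
      exact zero
    by_cases hmin : ∀ q, IsProperSubprojection q p → q = 0
    · exact minimal p ⟨hp, hp0, hmin⟩
    push Not at hmin
    obtain ⟨q, hqp, hq0⟩ := hmin
    have hpq := hqp.sub hq0
    have horth : (p - q) * q = 0 := by
      have hstar : p * q = q := by
        simpa only [star_mul, hqp.left.isSelfAdjoint.star_eq, hp.isSelfAdjoint.star_eq]
          using congrArg star hqp.mul_eq
      rw [sub_mul, hstar, hqp.left.isIdempotentElem.eq, sub_self]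
    simpa only [sub_add_cancel] using
      add _ _ hpq.left hqp.left horth (ih _ hpq hpq.left) (ih _ hqp hqp.left)

end Projections

section PeirceComponent

section Basic

variable (R : Type*) {A : Type*} [CommSemiring R] [NonUnitalSemiring A] [Module R A]
  [IsScalarTower R A A] [SMulCommClass R A A]

/-- The subspace `pAq` of `A`; for idempotents `p` and `q` this is a component of a two-sided
Peirce decomposition. -/
def peirceComponent (p q : A) : Submodule R A := (LinearMap.mulLeftRight R (p, q)).range

variable {R}

lemma mul_mul_mem_peirceComponent (p x q : A) : p * x * q ∈ peirceComponent R p q := ⟨x, rfl⟩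

variable (R)

@[simp]
lemma peirceComponent_zero_left (q : A) : peirceComponent R 0 q = ⊥ := by
  rw [eq_bot_iff]
  rintro _ ⟨x, rfl⟩
  simp

@[simp]
lemma peirceComponent_zero_right (p : A) : peirceComponent R p 0 = ⊥ := by
  rw [eq_bot_iff]
  rintro _ ⟨x, rfl⟩
  simp

lemma peirceComponent_add_left_le (p p' q : A) :
    peirceComponent R (p + p') q ≤ peirceComponent R p q ⊔ peirceComponent R p' q := by
  rintro _ ⟨x, rfl⟩
  rw [LinearMap.mulLeftRight_apply, add_mul, add_mul]
  exact Submodule.add_mem_sup ⟨x, rfl⟩ ⟨x, rfl⟩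

lemma peirceComponent_add_right_le (p q q' : A) :
    peirceComponent R p (q + q') ≤ peirceComponent R p q ⊔ peirceComponent R p q' := by
  rintro _ ⟨x, rfl⟩
  rw [LinearMap.mulLeftRight_apply, mul_add]
  exact Submodule.add_mem_sup ⟨x, rfl⟩ ⟨x, rfl⟩

end Basic

@[simp]
lemma peirceComponent_one_one (R A : Type*) [CommSemiring R] [Semiring A] [Algebra R A] :
    peirceComponent R (1 : A) 1 = ⊤ :=
  eq_top_iff.mpr fun x _ ↦ ⟨x, by simp⟩

variable {K A : Type*} [Field K] [NonUnitalNormedRing A] [StarRing A] [CStarRing A] [Module K A]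
  [IsScalarTower K A A] [SMulCommClass K A A]

lemma peirceComponent_le_span_singleton {p q v : A} (hp : IsStarProjection p)
    (hq : IsStarProjection q) (hpp : peirceComponent K p p ≤ K ∙ p)
    (hqq : peirceComponent K q q ≤ K ∙ q) (hv : v ∈ peirceComponent K p q) (hv0 : v ≠ 0) :
    peirceComponent K p q ≤ K ∙ v := by
  obtain ⟨x, rfl⟩ := hv
  rintro _ ⟨y, rfl⟩
  simp only [LinearMap.mulLeftRight_apply] at hv0 ⊢
  set v := p * x * q with hv
  set w := p * y * q with hw
  have hvstar : star v = q * star x * p := by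
    simp only [hv, star_mul, hp.isSelfAdjoint.star_eq, hq.isSelfAdjoint.star_eq, mul_assoc]
  obtain ⟨c, hc⟩ : ∃ c : K, c • p = v * star v := by
    refine Submodule.mem_span_singleton.mp (hpp ?_)
    convert mul_mul_mem_peirceComponent p (x * q * (q * star x)) p using 1
    rw [hvstar, hv]
    simp only [mul_assoc]
  obtain ⟨d, hd⟩ : ∃ d : K, d • q = star v * w := by
    refine Submodule.mem_span_singleton.mp (hqq ?_)
    convert mul_mul_mem_peirceComponent q (star x * p * (p * y)) q using 1
    rw [hvstar, hw]
    simp only [mul_assoc]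
  have hc0 : c ≠ 0 := by
    rintro rfl
    rw [zero_smul, eq_comm, CStarRing.mul_star_self_eq_zero_iff] at hc
    exact hv0 hc
  have hpw : p * w = w := by simp only [hw, ← mul_assoc, hp.isIdempotentElem.eq]
  have hvq : v * q = v := by simp only [hv, mul_assoc, hq.isIdempotentElem.eq]
  have hcw : c • w = d • v := calc
    c • w = (c • p) * w := by rw [smul_mul_assoc, hpw]
    _ = v * (d • q) := by rw [hc, hd, mul_assoc]
    _ = d • v := by rw [mul_smul_comm, hvq]
  refine Submodule.mem_span_singleton.mpr ⟨c⁻¹ * d, ?_⟩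
  rw [mul_smul, ← hcw, inv_smul_smul₀ hc0]

lemma finiteDimensional_peirceComponent_of_le_span {p q : A} (hp : IsStarProjection p)
    (hq : IsStarProjection q) (hpp : peirceComponent K p p ≤ K ∙ p)
    (hqq : peirceComponent K q q ≤ K ∙ q) : FiniteDimensional K (peirceComponent K p q) := by
  by_cases hbot : peirceComponent K p q = ⊥
  · rw [hbot]
    infer_instance
  obtain ⟨v, hv, hv0⟩ := Submodule.exists_mem_ne_zero_of_ne_bot hbot
  exact Submodule.finiteDimensional_of_le
    (peirceComponent_le_span_singleton hp hq hpp hqq hv hv0)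

end PeirceComponent

section Quasispectrum

variable {R A : Type*} [CommRing R] [NonUnitalRing A] [Module R A] [IsScalarTower R A A]
  [SMulCommClass R A A]

lemma mem_quasispectrum_of_mul_eq_smul {a v : A} {c : R} (hv : v ≠ 0) (h : a * v = c • v) :
    c ∈ quasispectrum R a := by
  rw [Unitization.quasispectrum_eq_spectrum_inr, spectrum.mem_iff]
  intro hu
  have hzero : (algebraMap R (Unitization R A) c - (a : Unitization R A)) * v = 0 := by
    rw [sub_mul, ← Algebra.smul_def, ← Unitization.inr_mul, h, Unitization.inr_smul, sub_self]
  exact hv (Unitization.inr_injective (hu.mul_right_eq_zero.mp hzero))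

lemma spectrum_unitization_eq (x : Unitization R A) :
    spectrum R x = {x.fst} + quasispectrum R x.snd := by
  rw [Unitization.quasispectrum_eq_spectrum_inr, spectrum.singleton_add_eq]
  exact congrArg _ (Unitization.inl_fst_add_inr_snd_eq x).symm

end Quasispectrum

section FunctionalCalculus

variable {A : Type*} [TopologicalSpace A] [NonUnitalRing A] [StarRing A] [Module ℂ A]
  [IsScalarTower ℂ A A] [SMulCommClass ℂ A A]
  [NonUnitalContinuousFunctionalCalculus ℂ A IsStarNormal]

lemma exists_isStarProjection_mul_eq_smul {b : A} [IsStarNormal b]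
    (hfin : (quasispectrum ℂ b).Finite) {z : ℂ} (hz : z ∈ quasispectrum ℂ b) (hz0 : z ≠ 0) :
    ∃ q, IsStarProjection q ∧ q ≠ 0 ∧ q * b = z • q := by
  classical
  let χ : ℂ → ℂ := Pi.single z 1
  have hχ : ContinuousOn χ (quasispectrum ℂ b) := hfin.continuousOn χ
  have hχ0 : χ 0 = 0 := Pi.single_eq_of_ne hz0.symm 1
  have hχz : χ z = 1 := Pi.single_eq_same z 1
  have hspec : quasispectrum ℂ (cfcₙ χ b) = χ '' quasispectrum ℂ b := cfcₙ_map_quasispectrum χ b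
  refine ⟨cfcₙ χ b, ?_, fun hzero ↦ ?_, ?_⟩
  · rw [isStarProjection_iff_quasispectrum_subset_and_isStarNormal, hspec]
    refine ⟨?_, cfcₙ_predicate χ b⟩
    rintro _ ⟨w, -, rfl⟩
    by_cases hw : w = z <;> simp [χ, hw]
  · have hmem : (1 : ℂ) ∈ quasispectrum ℂ (cfcₙ χ b) := hspec ▸ ⟨z, hz, hχz⟩
    rw [hzero, CFC.quasispectrum_zero_eq] at hmem
    exact one_ne_zero hmem
  · calc cfcₙ χ b * b
        = cfcₙ (fun w ↦ χ w * w) b := by rw [cfcₙ_mul χ (fun w ↦ w) b, cfcₙ_id' ℂ b]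
      _ = cfcₙ (fun w ↦ z • χ w) b := cfcₙ_congr fun w _ ↦ by
          by_cases hw : w = z <;> simp [χ, hw]
      _ = z • cfcₙ χ b := cfcₙ_smul z χ b hχ hχ0

lemma mem_span_singleton_of_isMinimalProjection {p b : A} (hp : IsMinimalProjection p)
    [IsStarNormal b] (hfin : (quasispectrum ℂ b).Finite) (hpb : p * b = b) (hbp : b * p = b) :
    b ∈ ℂ ∙ p := by
  by_cases hzero : quasispectrum ℂ b ⊆ {0}
  · rw [CFC.eq_zero_of_quasispectrum_eq_zero b hzero]
    exact zero_mem _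
  obtain ⟨z, hz, hz0 : z ≠ 0⟩ := Set.not_subset.mp hzero
  obtain ⟨q, hq, hq0, hqb⟩ := exists_isStarProjection_mul_eq_smul hfin hz hz0
  have hqp : q * p = q := by
    have hzqp : z • (q * p) = z • q := by rw [← smul_mul_assoc, ← hqb, mul_assoc, hbp]
    exact smul_right_injective A hz0 hzqp
  have hqeq : q = p := by
    by_contra hne
    exact hq0 (hp.eq_zero_of_isProperSubprojection q ⟨hq, hp.toIsStarProjection, hqp, hne⟩)
  exact Submodule.mem_span_singleton.mpr ⟨z, by rw [← hqeq, ← hqb, hqeq, hpb]⟩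

lemma peirceComponent_self_le_span_of_isMinimalProjection [StarModule ℂ A]
    (h : ∀ a : A, IsSelfAdjoint a → (quasispectrum ℂ a).Finite) {p : A}
    (hp : IsMinimalProjection p) : peirceComponent ℂ p p ≤ ℂ ∙ p := by
  rw [peirceComponent, LinearMap.range_eq_map, ← span_selfAdjoint, Submodule.map_span_le]
  intro x hx
  rw [LinearMap.mulLeftRight_apply]
  have hsa : IsSelfAdjoint (p * x * p) := by
    simpa only [hp.isSelfAdjoint.star_eq] using IsSelfAdjoint.conjugate hx p
  have hnormal : IsStarNormal (p * x * p) := hsa.isStarNormal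
  refine mem_span_singleton_of_isMinimalProjection hp (h _ hsa) ?_ ?_
  · rw [← mul_assoc, ← mul_assoc, hp.isIdempotentElem.eq]
  · rw [mul_assoc, hp.isIdempotentElem.eq]

end FunctionalCalculus

section CStarAlgebra

variable {A : Type*} [NonUnitalCStarAlgebra A]

lemma exists_isSelfAdjoint_infinite_quasispectrum {p : ℕ → A} (hp : ∀ n, IsStarProjection (p n))
    (hne : ∀ n, p n ≠ 0) (horth : Pairwise fun m n ↦ p m * p n = 0) :
    ∃ a : A, IsSelfAdjoint a ∧ (quasispectrum ℂ a).Infinite := by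
  let c (n : ℕ) : ℂ := (1 / 2 : ℝ) ^ n
  have hsum : Summable fun n ↦ c n • p n := by
    refine Summable.of_norm_bounded summable_geometric_two fun n ↦ ?_
    calc ‖c n • p n‖ = (1 / 2 : ℝ) ^ n * ‖p n‖ := by simp [c, norm_smul]
      _ ≤ (1 / 2 : ℝ) ^ n := mul_le_of_le_one_right (by positivity) (hp n).norm_le
  have hmul (m : ℕ) : (∑' n, c n • p n) * p m = c m • p m := by
    rw [← hsum.tsum_mul_right, tsum_eq_single m, smul_mul_assoc, (hp m).isIdempotentElem.eq]
    intro n hnm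
    rw [smul_mul_assoc, horth hnm, smul_zero]
  have hinj : Function.Injective c := by
    have hpow := pow_right_injective₀ (a := (1 / 2 : ℝ)) (by norm_num) (by norm_num)
    simpa [c, Function.comp_def] using Complex.ofReal_injective.comp hpow
  refine ⟨∑' n, c n • p n, ?_, Set.infinite_of_injective_forall_mem hinj fun m ↦
    mem_quasispectrum_of_mul_eq_smul (hne m) (hmul m)⟩
  rw [IsSelfAdjoint, tsum_star]
  simp [c, (hp _).isSelfAdjoint.star_eq]

theorem wellFounded_isProperSubprojection
    (h : ∀ a : A, IsSelfAdjoint a → (quasispectrum ℂ a).Finite) :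
    WellFounded (IsProperSubprojection (A := A)) := by
  rw [wellFounded_iff_isEmpty_descending_chain]
  refine ⟨fun ⟨f, hf⟩ ↦ ?_⟩
  obtain ⟨a, ha, hinf⟩ := exists_isSelfAdjoint_infinite_quasispectrum
    (fun n ↦ (hf n).left.sub_of_mul_eq_left (hf n).right (hf n).mul_eq)
    (fun n ↦ sub_ne_zero.mpr (hf n).ne.symm)
    (pairwise_mul_sub_succ_eq_zero (fun n ↦ (hf n).right) fun n ↦ (hf n).mul_eq)
  exact hinf (h a ha)

theorem finiteDimensional_peirceComponent
    (h : ∀ a : A, IsSelfAdjoint a → (quasispectrum ℂ a).Finite) {p q : A}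
    (hp : IsStarProjection p) (hq : IsStarProjection q) :
    FiniteDimensional ℂ (peirceComponent ℂ p q) := by
  have hwf := wellFounded_isProperSubprojection h
  have hminimal {p : A} (hp : IsMinimalProjection p) : peirceComponent ℂ p p ≤ ℂ ∙ p :=
    peirceComponent_self_le_span_of_isMinimalProjection h hp
  induction hp using isStarProjection_induction hwf with
  | zero => rw [peirceComponent_zero_left]; infer_instance
  | add p p' _ _ _ ihp ihp' =>
    exact Submodule.finiteDimensional_of_le (peirceComponent_add_left_le ℂ p p' q)
  | minimal p hp =>
    induction hq using isStarProjection_induction hwf with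
    | zero => rw [peirceComponent_zero_right]; infer_instance
    | add q q' _ _ _ ihq ihq' =>
      exact Submodule.finiteDimensional_of_le (peirceComponent_add_right_le ℂ p q q')
    | minimal q hq =>
      exact finiteDimensional_peirceComponent_of_le_span hp.toIsStarProjection
        hq.toIsStarProjection (hminimal hp) (hminimal hq)

end CStarAlgebra

/-- If `A` is a (not necessarily unital) C*-algebra in which the spectrum (computed in the
unitization) of every self-adjoint element is finite, then `A` is finite dimensional over `ℂ`. -/
theorem finiteDimensional_of_selfAdjoint_spectra_finite
    (A : Type*) [NonUnitalCStarAlgebra A]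
    (h : ∀ a : A, IsSelfAdjoint a → (quasispectrum ℂ a).Finite) :
    FiniteDimensional ℂ A := by
  have hspec (x : Unitization ℂ A) (hx : IsSelfAdjoint x) : (quasispectrum ℂ x).Finite := by
    have hsnd : IsSelfAdjoint x.snd := by
      rw [IsSelfAdjoint, ← Unitization.snd_star, hx.star_eq]
    rw [quasispectrum_eq_spectrum_union_zero, spectrum_unitization_eq]
    exact ((Set.finite_singleton _).add (h _ hsnd)).union (Set.finite_singleton 0)
  have htop : FiniteDimensional ℂ (⊤ : Submodule ℂ (Unitization ℂ A)) :=
    peirceComponent_one_one ℂ (Unitization ℂ A) ▸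
      finiteDimensional_peirceComponent hspec (.one _) (.one _)
  have : FiniteDimensional ℂ (Unitization ℂ A) := Submodule.topEquiv.finiteDimensional
  exact FiniteDimensional.of_injective (Unitization.inrHom ℂ ℂ A) Unitization.inr_injective
end

section
/- If S is an infinite compact subset of ℂ and p ∈ S, then the Banach space I_p(S) = {A ∈ C(S) : A(p) = 0} (with the supremum norm) does not have the fixed point property for nonexpansive mappings: there exist a nonempty bounded closed convex subset K of I_p(S) and a nonexpansive map M : K → K with no fixed point. -/
/-!
In a normed lattice, truncate the translation by `h ≥ 0` at `w ≥ 0`: the map `f ↦ w ⊓ (f + h)` is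
nonexpansive, and it fixes `f` exactly when `w - f` and `h` are disjoint. In `C(X, ℝ)` it preserves
the functions between `0` and `w` that vanish on the zero set of `h`. A fixed point among them is
`w` where `h ≠ 0` and `0` where `h = 0`, which is discontinuous as soon as `w` is nonzero at some
boundary point `q` of the zero set of `h`. Such a `q` exists for `h = |g - g q|` when `g` is not
locally constant; on an infinite compact Hausdorff space, a sum of bumps of heights `2⁻ⁿ` in
disjoint open sets is such a `g`. Choosing `w = 1` if `g p = g q` and `w = |g - g p|` otherwise
makes all the functions above vanish at `p`.
-/

/-- For `p ∈ S`, the subspace of `C(S, ℂ)` of functions vanishing at `p`,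
as a `ℂ`-submodule. -/
noncomputable def vanishingIdeal (S : Set ℂ) [CompactSpace S] (p : S) : Submodule ℂ C(S, ℂ) where
  carrier := {A | A p = 0}
  add_mem' := by
    intro a b ha hb
    simp only [Set.mem_setOf_eq, ContinuousMap.add_apply] at *
    rw [ha, hb, add_zero]
  zero_mem' := by simp
  smul_mem' := by
    intro c a ha
    simp only [Set.mem_setOf_eq, ContinuousMap.smul_apply] at *
    rw [ha, smul_zero]

open Function Set

/-- The fixed point property of a single metric space `K`: every nonexpansive self-map of `K` has a
fixed point. -/
def NonexpansiveFPP (K : Type*) [PseudoMetricSpace K] : Prop :=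
  ∀ M : K → K, LipschitzWith 1 M → ∃ x, IsFixedPt M x

theorem NonexpansiveFPP.of_isometryEquiv {K L : Type*} [PseudoMetricSpace K] [PseudoMetricSpace L]
    (hL : NonexpansiveFPP L) (e : K ≃ᵢ L) : NonexpansiveFPP K := by
  intro M hM
  have hconj : LipschitzWith 1 (e ∘ M ∘ e.symm) := by
    simpa only [one_mul] using e.isometry.lipschitz.comp (hM.comp e.symm.isometry.lipschitz)
  obtain ⟨y, hy⟩ := hL _ hconj
  exact ⟨e.symm y, e.injective (hy.trans (e.apply_symm_apply y).symm)⟩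

/-- The fixed point property for nonexpansive mappings of a real normed space `E`. The self-maps
are maps of the subtype `K`, so they need not be defined outside `K`. -/
def HasFPP (E : Type*) [NormedAddCommGroup E] [NormedSpace ℝ E] : Prop :=
  ∀ K : Set E, K.Nonempty → Bornology.IsBounded K → IsClosed K → Convex ℝ K → NonexpansiveFPP K

theorem exists_nonexpansive_of_not_hasFPP {E : Type*} [NormedAddCommGroup E] [NormedSpace ℂ E]
    (hE : ¬ HasFPP E) :
    ∃ K : Set E, K.Nonempty ∧ Bornology.IsBounded K ∧ IsClosed K ∧
      (∀ x ∈ K, ∀ y ∈ K, ∀ t : ℝ, 0 ≤ t → t ≤ 1 →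
        ((1 - t : ℝ) : ℂ) • x + ((t : ℝ) : ℂ) • y ∈ K) ∧
      ∃ M : E → E, MapsTo M K K ∧ (∀ x ∈ K, ∀ y ∈ K, ‖M x - M y‖ ≤ ‖x - y‖) ∧
        ∀ x ∈ K, M x ≠ x := by
  simp only [HasFPP, NonexpansiveFPP, not_forall, not_exists] at hE
  obtain ⟨K, hne, hbdd, hclosed, hconv, M, hM, hfix⟩ := hE
  let M' : E → E := extend Subtype.val (Subtype.val ∘ M) id
  have hM' (x : K) : M' x = M x := Subtype.val_injective.extend_apply _ _ x
  refine ⟨K, hne, hbdd, hclosed, fun x hx y hy t ht₀ ht₁ => ?_, M', fun x hx => ?_,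
    fun x hx y hy => ?_, fun x hx h => ?_⟩
  · simpa only [Complex.coe_smul] using hconv hx hy (sub_nonneg.2 ht₁) ht₀ (sub_add_cancel 1 t)
  · rw [hM' ⟨x, hx⟩]
    exact (M ⟨x, hx⟩).2
  · rw [hM' ⟨x, hx⟩, hM' ⟨y, hy⟩, ← dist_eq_norm, ← dist_eq_norm]
    simpa only [NNReal.coe_one, one_mul, Subtype.dist_eq] using hM.dist_le_mul ⟨x, hx⟩ ⟨y, hy⟩
  · exact hfix ⟨x, hx⟩ (Subtype.ext ((hM' ⟨x, hx⟩).symm.trans h))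

theorem not_hasFPP_of_linearIsometry {𝕜 E F : Type*} [Ring 𝕜] [SMul ℝ 𝕜]
    [NormedAddCommGroup E] [NormedSpace ℝ E] [CompleteSpace E]
    [NormedAddCommGroup F] [NormedSpace ℝ F] [Module 𝕜 F] [IsScalarTower ℝ 𝕜 F]
    {W : Submodule 𝕜 F} (T : E →ₗᵢ[ℝ] F) {K : Set E} (hKW : MapsTo T K W) (hne : K.Nonempty)
    (hbdd : Bornology.IsBounded K) (hclosed : IsClosed K) (hconv : Convex ℝ K)
    (hK : ¬ NonexpansiveFPP K) : ¬ HasFPP W := by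
  let K' : Set W := Subtype.val ⁻¹' (T '' K)
  let e : K → K' := fun x => ⟨⟨T x, hKW x.2⟩, mem_image_of_mem T x.2⟩
  have he : Isometry e := fun x y => T.isometry x y
  have he_surj : Surjective e := fun ⟨y, x, hx, hxy⟩ => ⟨⟨x, hx⟩, Subtype.ext (Subtype.ext hxy)⟩
  intro hW
  refine hK ((hW K' ?_ ?_ ?_ ?_).of_isometryEquiv
    ⟨Equiv.ofBijective e ⟨he.injective, he_surj⟩, he⟩)
  · obtain ⟨x, hx⟩ := hne
    exact ⟨_, (e ⟨x, hx⟩).2⟩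
  · exact isometry_subtype_coe.antilipschitz.isBounded_preimage (T.lipschitz.isBounded_image hbdd)
  · exact (T.isometry.isClosedEmbedding.isClosedMap K hclosed).preimage continuous_subtype_val
  · exact (hconv.linear_image T.toLinearMap).linear_preimage (W.restrictScalars ℝ).subtype

section Lattice

variable {E : Type*} [Lattice E]

/-- The translation by `h` truncated above at `w`; the fixed-point-free nonexpansive map of the
construction, for suitable `w` and `h` in `C(X, ℝ)`. -/
def truncatedShift [Add E] (w h f : E) : E := w ⊓ (f + h)

variable [AddCommGroup E] [IsOrderedAddMonoid E]

theorem mapsTo_truncatedShift_Icc {w h : E} (hw : 0 ≤ w) (hh : 0 ≤ h) :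
    MapsTo (truncatedShift w h) (Icc 0 w) (Icc 0 w) :=
  fun _ hf => ⟨le_inf hw (add_nonneg hf.1 hh), inf_le_left⟩

theorem isFixedPt_truncatedShift_iff {w h f : E} :
    IsFixedPt (truncatedShift w h) f ↔ (w - f) ⊓ h = 0 := by
  rw [IsFixedPt, truncatedShift, ← sub_eq_zero, inf_sub, add_sub_cancel_left]

end Lattice

section NormedLattice

variable {E : Type*} [NormedAddCommGroup E] [Lattice E] [HasSolidNorm E] [IsOrderedAddMonoid E]

theorem lipschitzWith_truncatedShift (w h : E) : LipschitzWith 1 (truncatedShift w h) :=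
  LipschitzWith.of_dist_le_mul fun f g => by
    simpa only [truncatedShift, dist_eq_norm, NNReal.coe_one, one_mul, add_sub_add_right_eq_sub,
      inf_comm w] using norm_inf_sub_inf_le_norm (f + h) (g + h) w

theorem isBounded_Icc_zero (w : E) : Bornology.IsBounded (Icc 0 w) :=
  isBounded_iff_forall_norm_le.2 ⟨‖w‖, fun f hf => norm_le_norm_of_abs_le_abs <| by
    simpa only [abs_of_nonneg hf.1, abs_of_nonneg (hf.1.trans hf.2)] using hf.2⟩

end NormedLattice

section ContinuousFunctions

variable {X : Type*} [TopologicalSpace X]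

theorem exists_mem_closure_ne_of_infinite_range [CompactSpace X] {Y : Type*} {g : X → Y}
    (hg : (range g).Infinite) : ∃ q, q ∈ closure {x | g x ≠ g q} := by
  by_contra! hq
  have hconst : IsLocallyConstant g := (IsLocallyConstant.iff_eventually_eq g).2 fun q => by
    simpa only [mem_closure_iff_frequently, Filter.not_frequently, mem_ofPred_eq, not_not]
      using hq q
  exact hg hconst.range_finite

theorem exists_continuousMap_infinite_range (X : Type*) [TopologicalSpace X] [T35Space X]
    [Infinite X] : ∃ g : C(X, ℝ), (range g).Infinite := by
  obtain ⟨U, hU_inf, hU_open, hU_disj⟩ := exists_seq_infinite_isOpen_pairwise_disjoint X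
  choose x hx using fun n => (hU_inf n).nonempty
  choose f hf_cont hf_zero hf_one using fun n =>
    CompletelyRegularSpace.completely_regular (x n) (U n)ᶜ (hU_open n).isClosed_compl
      (not_not.2 (hx n))
  let bump (n : ℕ) (y : X) : ℝ := (1 / 2) ^ n * (1 - f n y)
  have hbump_cont (n : ℕ) : Continuous (bump n) := by fun_prop
  have hbump_le (n : ℕ) (y : X) : ‖bump n y‖ ≤ (1 / 2) ^ n := by
    have hpow : (0 : ℝ) ≤ (1 / 2) ^ n := by positivity
    rw [Real.norm_of_nonneg (mul_nonneg hpow (sub_nonneg.2 (f n y).2.2))]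
    exact mul_le_of_le_one_right hpow (sub_le_self 1 (f n y).2.1)
  have hbump_eq_zero {m n : ℕ} (hmn : m ≠ n) : bump m (x n) = 0 := by
    have hxm : x n ∈ (U m)ᶜ := fun hxm => (hU_disj hmn).le_bot ⟨hxm, hx n⟩
    simp [bump, hf_one m hxm]
  let g : C(X, ℝ) :=
    ⟨fun y => ∑' n, bump n y, continuous_tsum hbump_cont summable_geometric_two hbump_le⟩
  have hg (n : ℕ) : g (x n) = (1 / 2) ^ n := calc
    g (x n) = bump n (x n) := tsum_eq_single n fun m hmn => hbump_eq_zero hmn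
    _ = (1 / 2) ^ n := by simp [bump, hf_zero]
  have hinj : Injective fun n : ℕ => (1 / 2 : ℝ) ^ n :=
    pow_right_injective₀ (by norm_num) (by norm_num)
  exact ⟨g, infinite_of_injective_forall_mem hinj fun n => ⟨x n, hg n⟩⟩

theorem exists_nonneg_mem_closure_support_of_infinite_range [CompactSpace X] {g : C(X, ℝ)}
    (hg : (range g).Infinite) (p : X) :
    ∃ w h : C(X, ℝ), 0 ≤ w ∧ 0 ≤ h ∧ (w p = 0 ∨ h p = 0) ∧
      ∃ q ∈ closure (support h), h q = 0 ∧ w q ≠ 0 := by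
  obtain ⟨q, hq⟩ := exists_mem_closure_ne_of_infinite_range hg
  let gap (x : X) : C(X, ℝ) := |g - ContinuousMap.const X (g x)|
  have hgap (x y : X) : gap x y = |g y - g x| := rfl
  have hsupport : support (gap q) = {x | g x ≠ g q} := by
    ext x
    simp [hgap, sub_eq_zero]
  rw [← hsupport] at hq
  have hqq : gap q q = 0 := by simp [hgap]
  by_cases hpq : g p = g q
  · exact ⟨1, gap q, zero_le_one, abs_nonneg _, Or.inr (by simp [hgap, hpq]), q, hq, hqq,
      one_ne_zero⟩
  · exact ⟨gap p, gap q, abs_nonneg _, abs_nonneg _, Or.inl (by simp [hgap]), q, hq,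
      hqq, by simpa [hgap, sub_eq_zero] using Ne.symm hpq⟩

/-- The continuous functions between `0` and `w` that vanish on the zero set of `h`; for suitable
`w` and `h` this is the closed convex set on which `truncatedShift w h` has no fixed point. -/
def supportedInterval (w h : C(X, ℝ)) : Set C(X, ℝ) :=
  Icc 0 w ∩ ContinuousMap.idealOfSet ℝ (support h)

variable {w h : C(X, ℝ)}

theorem eq_zero_of_mem_supportedInterval {f : C(X, ℝ)} (hf : f ∈ supportedInterval w h) {x : X}
    (hx : w x = 0 ∨ h x = 0) : f x = 0 :=
  hx.elim (fun hw => le_antisymm ((hf.1.2 x).trans_eq hw) (hf.1.1 x))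
    fun hh => hf.2 x (notMem_support.2 hh)

theorem zero_mem_supportedInterval (hw : 0 ≤ w) : 0 ∈ supportedInterval w h :=
  ⟨left_mem_Icc.2 hw, zero_mem _⟩

theorem convex_supportedInterval : Convex ℝ (supportedInterval w h) :=
  (convex_Icc 0 w).inter ((ContinuousMap.idealOfSet ℝ (support h)).restrictScalars ℝ).convex

theorem mapsTo_truncatedShift_supportedInterval (hw : 0 ≤ w) (hh : 0 ≤ h) :
    MapsTo (truncatedShift w h) (supportedInterval w h) (supportedInterval w h) := by
  refine fun f hf => ⟨mapsTo_truncatedShift_Icc hw hh hf.1, fun x hx => ?_⟩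
  have hhx : h x = 0 := notMem_support.1 hx
  have hfx : f x = 0 := hf.2 x hx
  have hwx : 0 ≤ w x := hw x
  calc truncatedShift w h f x = min (w x) (f x + h x) := rfl
    _ = 0 := by rw [hfx, hhx, add_zero, min_eq_right hwx]

theorem not_isFixedPt_truncatedShift {q : X} (hq : q ∈ closure (support h)) (hhq : h q = 0)
    (hwq : w q ≠ 0) {f : C(X, ℝ)} (hf : f ∈ supportedInterval w h) :
    ¬ IsFixedPt (truncatedShift w h) f := by
  intro hfix
  have hdisj (x : X) : min (w x - f x) (h x) = 0 :=
    DFunLike.congr_fun (isFixedPt_truncatedShift_iff.1 hfix) x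
  have heq : EqOn w f (support h) := fun x hx => by
    rcases min_choice (w x - f x) (h x) with hmin | hmin
    · exact sub_eq_zero.1 (hmin.symm.trans (hdisj x))
    · exact absurd (hmin.symm.trans (hdisj x)) hx
  have hwq_eq : w q = f q := heq.closure w.continuous f.continuous hq
  exact hwq (hwq_eq.trans (eq_zero_of_mem_supportedInterval hf (Or.inr hhq)))

instance [CompactSpace X] {β : Type*} [NormedAddCommGroup β] [Lattice β] [HasSolidNorm β]
    [IsOrderedAddMonoid β] : HasSolidNorm C(X, β) where
  solid f g hfg := (ContinuousMap.norm_le f (norm_nonneg g)).2 fun x =>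
    (HasSolidNorm.solid (hfg x)).trans (g.norm_coe_le_norm x)

variable [CompactSpace X]

theorem isClosed_supportedInterval : IsClosed (supportedInterval w h) :=
  isClosed_Icc.inter (ContinuousMap.idealOfSet_closed ℝ _)

theorem isBounded_supportedInterval : Bornology.IsBounded (supportedInterval w h) :=
  (isBounded_Icc_zero w).subset inter_subset_left

theorem not_nonexpansiveFPP_supportedInterval (hw : 0 ≤ w) (hh : 0 ≤ h) {q : X}
    (hq : q ∈ closure (support h)) (hhq : h q = 0) (hwq : w q ≠ 0) :
    ¬ NonexpansiveFPP (supportedInterval w h) := by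
  intro hK
  have hmaps := mapsTo_truncatedShift_supportedInterval hw hh
  have hlip : LipschitzWith 1 hmaps.restrict :=
    (lipschitzWith_truncatedShift w h).lipschitzOnWith.mapsToRestrict hmaps
  obtain ⟨f, hf⟩ := hK _ hlip
  exact not_isFixedPt_truncatedShift hq hhq hwq f.2 (congrArg Subtype.val hf)

/-- Postcomposition with a linear isometry, as a linear isometry between spaces of continuous
functions. It carries real-valued functions isometrically into vector-valued ones. -/
def linearIsometryCompLeft {𝕜 E F : Type*} (X : Type*) [TopologicalSpace X] [CompactSpace X]
    [NormedField 𝕜] [NormedAddCommGroup E] [NormedSpace 𝕜 E] [NormedAddCommGroup F]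
    [NormedSpace 𝕜 F] (φ : E →ₗᵢ[𝕜] F) : C(X, E) →ₗᵢ[𝕜] C(X, F) where
  toLinearMap := (φ.toContinuousLinearMap.compLeftContinuous 𝕜 X).toLinearMap
  norm_map' f := by simp [ContinuousMap.norm_eq_iSup_norm]

end ContinuousFunctions

theorem vanishingIdeal_eq_ker_evalCLM (S : Set ℂ) [CompactSpace S] (p : S) :
    vanishingIdeal S p = (ContinuousMap.evalCLM ℂ p : C(S, ℂ) →L[ℂ] ℂ).ker :=
  rfl

theorem vanishingIdeal_not_hasFPP_general {X : Type*} [TopologicalSpace X] [CompactSpace X]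
    [T2Space X] [Infinite X] (𝕜 F : Type*) [NormedField 𝕜] [NormedAlgebra ℝ 𝕜]
    [NormedAddCommGroup F] [NormedSpace ℝ F] [NormedSpace 𝕜 F] [IsScalarTower ℝ 𝕜 F] [Nontrivial F]
    (p : X) :
    ¬ HasFPP (ContinuousMap.evalCLM 𝕜 p : C(X, F) →L[𝕜] F).ker := by
  obtain ⟨g, hg⟩ := exists_continuousMap_infinite_range X
  obtain ⟨w, h, hw, hh, hp, q, hq, hhq, hwq⟩ :=
    exists_nonneg_mem_closure_support_of_infinite_range hg p
  obtain ⟨v, hv⟩ := exists_norm_eq F zero_le_one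
  let T : C(X, ℝ) →ₗᵢ[ℝ] C(X, F) := linearIsometryCompLeft X (LinearIsometry.toSpanSingleton ℝ F hv)
  have hT : MapsTo T (supportedInterval w h) (ContinuousMap.evalCLM 𝕜 p : C(X, F) →L[𝕜] F).ker :=
    fun f hf => calc
      T f p = f p • v := rfl
      _ = 0 := by rw [eq_zero_of_mem_supportedInterval hf hp, zero_smul]
  exact not_hasFPP_of_linearIsometry T hT ⟨0, zero_mem_supportedInterval hw⟩
    isBounded_supportedInterval isClosed_supportedInterval convex_supportedInterval
    (not_nonexpansiveFPP_supportedInterval hw hh hq hhq hwq)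

/-- If `S` is an infinite compact subset of `ℂ` and `p ∈ S`, then the Banach space
`I_p(S) = {A ∈ C(S, ℂ) : A(p) = 0}` (with the supremum norm) fails the fixed point
property for nonexpansive mappings: there is a nonempty bounded closed convex subset `K`
and a nonexpansive self-map of `K` with no fixed point. -/
theorem vanishingIdeal_not_hasFPP
    (S : Set ℂ) [CompactSpace S] (hS : S.Infinite) (p : S) :
    ∃ K : Set (vanishingIdeal S p), K.Nonempty ∧ Bornology.IsBounded K ∧ IsClosed K ∧
      (∀ x ∈ K, ∀ y ∈ K, ∀ t : ℝ, 0 ≤ t → t ≤ 1 →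
        ((1 - t : ℝ) : ℂ) • x + ((t : ℝ) : ℂ) • y ∈ K) ∧
      ∃ M : vanishingIdeal S p → vanishingIdeal S p, Set.MapsTo M K K ∧
        (∀ x ∈ K, ∀ y ∈ K, ‖M x - M y‖ ≤ ‖x - y‖) ∧
        ∀ x ∈ K, M x ≠ x := by
  have : Infinite S := hS.to_subtype
  exact exists_nonexpansive_of_not_hasFPP
    (vanishingIdeal_eq_ker_evalCLM S p ▸ vanishingIdeal_not_hasFPP_general ℂ ℂ p)
end

section
/- Let A be a C*-algebra in which the spectrum of every self-adjoint element is finite. Then for every nonzero projection P in A there exist a maximal projection P_max and a minimal projection P₁ in A such that P₁ ≤ P ≤ P_max. -/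
/-!
Pairwise orthogonal nonzero projections `e n` are eigenvectors, with eigenvalues `c n`, of left
multiplication by `∑' n, c n • e n`. If the scalars `c n` are real, distinct and decay fast enough
for the series to converge, this is a self-adjoint element with infinite spectrum. A strictly
monotone sequence of projections, increasing or decreasing, produces such `e n` as differences of
consecutive terms, so finite spectra force both chain conditions on the projections.
-/

open Filter Topology

theorem mem_quasispectrum_of_mul_eq_smul_s12 {R A : Type*} [CommSemiring R] [NonUnitalRing A]
    [Module R A] [IsScalarTower R A A] {a e : A} {r : R} (he : e ≠ 0) (hae : a * e = r • e) :
    r ∈ quasispectrum R a := by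
  intro hr hquasi
  obtain ⟨y, -, hy⟩ := isQuasiregular_iff.mp hquasi
  have hinv : (hr.unit⁻¹ • a) * e = e := by
    rw [smul_mul_assoc, hae, inv_smul_eq_iff, Units.smul_def, hr.unit_spec]
  have hye : (-(hr.unit⁻¹ • a) + y + y * -(hr.unit⁻¹ • a)) * e = 0 := by rw [hy, zero_mul]
  rw [add_mul, add_mul, mul_assoc, neg_mul, hinv, mul_neg] at hye
  exact he (by simpa using hye)

theorem exists_strictMono_summable_pow_smul {𝕜 E : Type*} [SeminormedRing 𝕜]
    [SeminormedAddCommGroup E] [CompleteSpace E] [Module 𝕜 E] [IsBoundedSMul 𝕜 E]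
    {r : 𝕜} (hr : ‖r‖ < 1) (x : ℕ → E) :
    ∃ φ : ℕ → ℕ, StrictMono φ ∧ Summable fun n ↦ r ^ φ n • x n := by
  have hsmall (n : ℕ) : ∀ᶠ k in atTop, ‖r ^ k • x n‖ < (1 / 2 : ℝ) ^ n := by
    have hlim : Tendsto (fun k ↦ ‖r ^ k • x n‖) atTop (𝓝 0) := by
      simpa using ((tendsto_pow_atTop_nhds_zero_of_norm_lt_one hr).smul_const (x n)).norm
    exact hlim.eventually_lt_const (by positivity)
  obtain ⟨φ, hφ, hφx⟩ := extraction_forall_of_eventually hsmall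
  exact ⟨φ, hφ, .of_norm_bounded summable_geometric_two fun n ↦ (hφx n).le⟩

theorem tsum_smul_mul_eq_smul_of_pairwise_mul_eq_zero {ι R A : Type*}
    [NonUnitalNonAssocSemiring A] [TopologicalSpace A] [IsTopologicalSemiring A] [T2Space A]
    [SMulZeroClass R A] [IsScalarTower R A A] {c : ι → R} {e : ι → A}
    (hsum : Summable fun i ↦ c i • e i) (he : ∀ i, IsIdempotentElem (e i))
    (horth : Pairwise fun i j ↦ e i * e j = 0) (j : ι) :
    (∑' i, c i • e i) * e j = c j • e j := by
  rw [← hsum.tsum_mul_right,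
    tsum_eq_single j fun i hij ↦ by rw [smul_mul_assoc, horth hij, smul_zero],
    smul_mul_assoc, (he j).eq]

theorem exists_isSelfAdjoint_infinite_quasispectrum_s12 (𝕜 : Type*) {A : Type*} [RCLike 𝕜]
    [NonUnitalNormedRing A] [CompleteSpace A] [StarRing A] [ContinuousStar A] [NormedSpace 𝕜 A]
    [IsScalarTower 𝕜 A A] [StarModule 𝕜 A] {e : ℕ → A} (he : ∀ n, IsStarProjection (e n))
    (he0 : ∀ n, e n ≠ 0) (horth : Pairwise fun m n ↦ e m * e n = 0) :
    ∃ a : A, IsSelfAdjoint a ∧ (quasispectrum 𝕜 a).Infinite := by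
  have hnorm : ‖(2⁻¹ : 𝕜)‖ < 1 := by
    rw [norm_inv, RCLike.norm_ofNat]
    norm_num
  obtain ⟨φ, hφ, hsum⟩ := exists_strictMono_summable_pow_smul hnorm e
  have hinj : Function.Injective fun n ↦ (2⁻¹ : 𝕜) ^ φ n := fun m n hmn ↦ by
    have hmn' : (2⁻¹ : ℝ) ^ φ m = 2⁻¹ ^ φ n := by simpa using congr(‖$hmn‖)
    exact hφ.injective (pow_right_injective₀ (by norm_num) (by norm_num) hmn')
  refine ⟨∑' n, (2⁻¹ : 𝕜) ^ φ n • e n, ?_, Set.infinite_of_injective_forall_mem hinj fun n ↦ ?_⟩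
  · simp [IsSelfAdjoint, tsum_star, (he _).isSelfAdjoint.star_eq]
  · exact mem_quasispectrum_of_mul_eq_smul_s12 (he0 n)
      (tsum_smul_mul_eq_smul_of_pairwise_mul_eq_zero hsum
        (fun n ↦ (he n).isIdempotentElem) horth n)

/-- The projections of a star ring, bundled so as to carry the algebraic order
`p * q = p ∧ q * p = p` independently of any order on the ring itself. -/
@[ext]
structure StarProjection (A : Type*) [Mul A] [Star A] where
  val : A
  isStarProjection : IsStarProjection val

namespace StarProjection

section Order

variable {A : Type*} [NonUnitalRing A] [StarRing A] {p q r s : StarProjection A}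

instance : LE (StarProjection A) :=
  ⟨fun p q ↦ p.val * q.val = p.val ∧ q.val * p.val = p.val⟩

theorem le_def : p ≤ q ↔ p.val * q.val = p.val ∧ q.val * p.val = p.val := Iff.rfl

instance : PartialOrder (StarProjection A) where
  le_refl p := ⟨p.isStarProjection.isIdempotentElem, p.isStarProjection.isIdempotentElem⟩
  le_trans p q r hpq hqr := by
    rw [le_def] at *
    exact ⟨by rw [← hpq.1, mul_assoc, hqr.1], by rw [← hpq.2, ← mul_assoc, hqr.2]⟩
  le_antisymm _ _ hpq hqp := StarProjection.ext (hpq.1.symm.trans hqp.2)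

instance : OrderBot (StarProjection A) where
  bot := ⟨0, .zero A⟩
  bot_le p := ⟨zero_mul p.val, mul_zero p.val⟩

theorem ne_bot_iff_val_ne_zero : p ≠ ⊥ ↔ p.val ≠ 0 := StarProjection.ext_iff.not

theorem isStarProjection_sub (hpq : p ≤ q) : IsStarProjection (q.val - p.val) :=
  p.isStarProjection.sub_of_mul_eq_left q.isStarProjection (le_def.mp hpq).1

theorem sub_mul_sub_eq_zero_of_le (hpq : p ≤ q) (hqr : q ≤ r) (hrs : r ≤ s) :
    (q.val - p.val) * (s.val - r.val) = 0 := by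
  simp only [sub_mul, mul_sub, (le_def.mp hqr).1, (le_def.mp (hqr.trans hrs)).1,
    (le_def.mp (hpq.trans hqr)).1, (le_def.mp (hpq.trans (hqr.trans hrs))).1, sub_self]

theorem sub_mul_sub_eq_zero_of_ge (hpq : p ≤ q) (hqr : q ≤ r) (hrs : r ≤ s) :
    (s.val - r.val) * (q.val - p.val) = 0 := by
  simp only [sub_mul, mul_sub, (le_def.mp hqr).2, (le_def.mp (hqr.trans hrs)).2,
    (le_def.mp (hpq.trans hqr)).2, (le_def.mp (hpq.trans (hqr.trans hrs))).2, sub_self]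

end Order

section ChainConditions

variable {𝕜 A : Type*} [RCLike 𝕜] [NonUnitalNormedRing A] [CompleteSpace A] [StarRing A]
  [ContinuousStar A] [NormedSpace 𝕜 A] [IsScalarTower 𝕜 A A] [StarModule 𝕜 A]

theorem not_pairwise_le_or_le_of_finite_quasispectrum
    (h : ∀ a : A, IsSelfAdjoint a → (quasispectrum 𝕜 a).Finite)
    {p q : ℕ → StarProjection A} (hpq : ∀ n, p n < q n) :
    ¬ Pairwise fun m n ↦ q m ≤ p n ∨ q n ≤ p m := by
  intro hdisj
  have horth : Pairwise fun m n ↦ ((q m).val - (p m).val) * ((q n).val - (p n).val) = 0 :=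
    fun m n hmn ↦ (hdisj hmn).elim
      (fun hle ↦ sub_mul_sub_eq_zero_of_le (hpq m).le hle (hpq n).le)
      (fun hle ↦ sub_mul_sub_eq_zero_of_ge (hpq n).le hle (hpq m).le)
  obtain ⟨a, ha, hinf⟩ := exists_isSelfAdjoint_infinite_quasispectrum_s12 𝕜
    (fun n ↦ isStarProjection_sub (hpq n).le)
    (fun n ↦ sub_ne_zero.mpr fun hn ↦ (hpq n).ne' (StarProjection.ext hn)) horth
  exact hinf (h a ha)

theorem wellFoundedLT_of_finite_quasispectrum
    (h : ∀ a : A, IsSelfAdjoint a → (quasispectrum 𝕜 a).Finite) :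
    WellFoundedLT (StarProjection A) := by
  refine ⟨wellFounded_iff_isEmpty_descending_chain.mpr ⟨fun ⟨f, hf⟩ ↦ ?_⟩⟩
  have hanti : Antitone f := antitone_nat_of_succ_le fun n ↦ (hf n).le
  exact not_pairwise_le_or_le_of_finite_quasispectrum h hf fun m n hmn ↦
    hmn.lt_or_gt.symm.imp (fun hnm ↦ hanti hnm) (fun hmn ↦ hanti hmn)

theorem wellFoundedGT_of_finite_quasispectrum
    (h : ∀ a : A, IsSelfAdjoint a → (quasispectrum 𝕜 a).Finite) :
    WellFoundedGT (StarProjection A) := by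
  refine ⟨wellFounded_iff_isEmpty_descending_chain.mpr ⟨fun ⟨f, hf⟩ ↦ ?_⟩⟩
  have hmono : Monotone f := monotone_nat_of_le_succ fun n ↦ (hf n).le
  exact not_pairwise_le_or_le_of_finite_quasispectrum h hf fun m n hmn ↦
    hmn.lt_or_gt.imp (fun hmn ↦ hmono hmn) (fun hnm ↦ hmono hnm)

end ChainConditions

end StarProjection

theorem exists_minimal_and_maximal_projection_general
    {𝕜 A : Type*} [RCLike 𝕜] [NonUnitalNormedRing A] [CompleteSpace A] [StarRing A]
    [ContinuousStar A] [NormedSpace 𝕜 A] [IsScalarTower 𝕜 A A] [StarModule 𝕜 A]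
    (h : ∀ a : A, IsSelfAdjoint a → (quasispectrum 𝕜 a).Finite)
    (P : A) (hP : IsSelfAdjoint P ∧ P * P = P) (hP0 : P ≠ 0) :
    ∃ Pmax P₁ : A,
      (IsSelfAdjoint Pmax ∧ Pmax * Pmax = Pmax) ∧
      (IsSelfAdjoint P₁ ∧ P₁ * P₁ = P₁) ∧ P₁ ≠ 0 ∧
      (∀ Q : A, (IsSelfAdjoint Q ∧ Q * Q = Q) → Q ≠ 0 →
        (Q * P₁ = Q ∧ P₁ * Q = Q) → Q = P₁) ∧
      (∀ Q : A, (IsSelfAdjoint Q ∧ Q * Q = Q) →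
        (Pmax * Q = Pmax ∧ Q * Pmax = Pmax) → Q = Pmax) ∧
      (P₁ * P = P₁ ∧ P * P₁ = P₁) ∧ (P * Pmax = P ∧ Pmax * P = P) := by
  have := StarProjection.wellFoundedLT_of_finite_quasispectrum h
  have := StarProjection.wellFoundedGT_of_finite_quasispectrum h
  have : IsAtomic (StarProjection A) := isAtomic_of_orderBot_wellFounded_lt wellFounded_lt
  let p : StarProjection A := ⟨P, hP.2, hP.1⟩
  obtain ⟨q, hq, hqp⟩ := (eq_bot_or_exists_atom_le p).resolve_left
    (StarProjection.ne_bot_iff_val_ne_zero.mpr hP0)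
  obtain ⟨r, hpr, hr⟩ := exists_maximal_ge_of_wellFoundedGT (fun _ ↦ True) p trivial
  refine ⟨r.val, q.val,
    ⟨r.isStarProjection.isSelfAdjoint, r.isStarProjection.isIdempotentElem⟩,
    ⟨q.isStarProjection.isSelfAdjoint, q.isStarProjection.isIdempotentElem⟩,
    StarProjection.ne_bot_iff_val_ne_zero.mp hq.ne_bot, fun Q hQ hQ0 hQq ↦ ?_, fun Q hQ hrQ ↦ ?_,
    StarProjection.le_def.mp hqp, StarProjection.le_def.mp hpr⟩
  · let Q' : StarProjection A := ⟨Q, hQ.2, hQ.1⟩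
    have hQ'q : Q' ≤ q := StarProjection.le_def.mpr hQq
    have hQ' : Q' ≠ ⊥ := StarProjection.ne_bot_iff_val_ne_zero.mpr hQ0
    exact congrArg StarProjection.val ((hq.le_iff_eq hQ').mp hQ'q)
  · let Q' : StarProjection A := ⟨Q, hQ.2, hQ.1⟩
    have hrQ' : r ≤ Q' := StarProjection.le_def.mpr hrQ
    exact congrArg StarProjection.val (hr.eq_of_le trivial hrQ').symm

/-- In a C*-algebra in which every self-adjoint element has finite spectrum (in the
unitization), every nonzero projection `P` lies between a minimal projection `P₁` and a
maximal projection `P_max` for the order `P ≤ Q ↔ PQ = QP = P`. -/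
theorem exists_minimal_and_maximal_projection
    {A : Type*} [NonUnitalCStarAlgebra A]
    (h : ∀ a : A, IsSelfAdjoint a → (quasispectrum ℂ a).Finite)
    (P : A) (hP : IsSelfAdjoint P ∧ P * P = P) (hP0 : P ≠ 0) :
    ∃ Pmax P₁ : A,
      (IsSelfAdjoint Pmax ∧ Pmax * Pmax = Pmax) ∧
      (IsSelfAdjoint P₁ ∧ P₁ * P₁ = P₁) ∧ P₁ ≠ 0 ∧
      -- `P₁` is minimal
      (∀ Q : A, (IsSelfAdjoint Q ∧ Q * Q = Q) → Q ≠ 0 →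
        (Q * P₁ = Q ∧ P₁ * Q = Q) → Q = P₁) ∧
      -- `Pmax` is maximal
      (∀ Q : A, (IsSelfAdjoint Q ∧ Q * Q = Q) →
        (Pmax * Q = Pmax ∧ Q * Pmax = Pmax) → Q = Pmax) ∧
      -- `P₁ ≤ P ≤ Pmax`
      (P₁ * P = P₁ ∧ P * P₁ = P₁) ∧ (P * Pmax = P ∧ Pmax * P = P) :=
  exists_minimal_and_maximal_projection_general h P hP hP0
end
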